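/- For integers i, j, c with 2 ≤ c ≤ i and j ≥ i + 2, define F(i,j,c) ∈ ℚ(t) by F(i,j,c) := h_{j+c−i−2}·h_{j+c−i−1}·h_i·h_{i+1}/(h_j·h_{j+1}·h_{c−2}·h_{c−1}) − t^{2(c−1)}·h_1·h_{i−c+1}·h_{j−i−1}/(h_{j+1}·h_{c−2}) − t^{4c}·h_{i−c}·h_{i−c+1}·h_{j−i−2}·h_{j−i−1}/(h_{c−2}·h_{c−1}·h_j·h_{j+1}). Then F(i,j,c) = 1. -/

import Mathlib

open Polynomial

/-- `hpoly α = 1 + t^2 + ⋯ + t^{2α}` for `α ≥ 0`. -/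
noncomputable def hpoly (α : ℤ) : Polynomial ℚ :=
  ∑ m ∈ Finset.range (α.toNat + 1), X ^ (2 * m)

/-- `Ppoly 0 = 1` and `Ppoly α = hpoly 0 ⋯ hpoly (α-1)` for `α > 0`. -/
noncomputable def Ppoly (α : ℤ) : Polynomial ℚ :=
  ∏ m ∈ Finset.range α.toNat, hpoly (m : ℤ)

/-- The image of `hpoly α` in the field of rational functions `ℚ(t)`. -/
noncomputable def hQ (α : ℤ) : RatFunc ℚ :=
  algebraMap (Polynomial ℚ) (RatFunc ℚ) (hpoly α)

/-- The image of `Ppoly α` in the field of rational functions `ℚ(t)`. -/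
noncomputable def PQ (α : ℤ) : RatFunc ℚ :=
  algebraMap (Polynomial ℚ) (RatFunc ℚ) (Ppoly α)

/-- The variable `t` of `ℚ(t)`. -/
noncomputable def tQ : RatFunc ℚ := RatFunc.X

/-- `F(i,j,c)`: the reduced form of identity (5.3) of the Appendix. -/
noncomputable def Ffun (i j c : ℤ) : RatFunc ℚ :=
  hQ (j + c - i - 2) * hQ (j + c - i - 1) * hQ i * hQ (i + 1) /
      (hQ j * hQ (j + 1) * hQ (c - 2) * hQ (c - 1)) -
    tQ ^ (2 * (c - 1)).toNat * hQ 1 * hQ (i - c + 1) * hQ (j - i - 1) /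
      (hQ (j + 1) * hQ (c - 2)) -
    tQ ^ (4 * c).toNat * hQ (i - c) * hQ (i - c + 1) * hQ (j - i - 2) *
        hQ (j - i - 1) /
      (hQ (c - 2) * hQ (c - 1) * hQ j * hQ (j + 1))

theorem hQ_mul (n : ℕ) : hQ (n : ℤ) * (tQ ^ 2 - 1) = (tQ ^ 2) ^ (n + 1) - 1 := by
  have : hQ (n : ℤ) = ∑ m ∈ Finset.range (n + 1), (tQ ^ 2) ^ m := by
    simp [hQ, hpoly, tQ, pow_mul]
  rw [this, geom_sum_mul]

theorem tQ_pow_ne (n : ℕ) : (tQ ^ 2) ^ (n + 1) - 1 ≠ 0 := by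
  have h : (X ^ (2 * (n + 1)) - C 1 : Polynomial ℚ) ≠ 0 :=
    X_pow_sub_C_ne_zero (by omega) 1
  have h2 := (map_ne_zero_iff (algebraMap (Polynomial ℚ) (RatFunc ℚ))
    (RatFunc.algebraMap_injective ℚ)).2 h
  simpa [tQ, pow_mul] using h2

theorem hQ_eq (n : ℕ) (α : ℤ) (h : α = n) :
    hQ α = ((tQ ^ 2) ^ (n + 1) - 1) / (tQ ^ 2 - 1) := by
  have h1 := tQ_pow_ne 0
  rw [zero_add, pow_one] at h1
  rw [h, eq_div_iff h1, hQ_mul]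

theorem key_identity (q A B D : RatFunc ℚ) (h1 : q - 1 ≠ 0) (h2 : A * q - 1 ≠ 0)
    (h3 : A * q ^ 2 - 1 ≠ 0) (h4 : A * B * D * q ^ 5 - 1 ≠ 0)
    (h5 : A * B * D * q ^ 6 - 1 ≠ 0) :
    (A * D * q ^ 3 - 1) / (q - 1) * ((A * D * q ^ 4 - 1) / (q - 1)) *
      ((A * B * q ^ 3 - 1) / (q - 1)) * ((A * B * q ^ 4 - 1) / (q - 1)) /
      ((A * B * D * q ^ 5 - 1) / (q - 1) * ((A * B * D * q ^ 6 - 1) / (q - 1)) *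
        ((A * q - 1) / (q - 1)) * ((A * q ^ 2 - 1) / (q - 1))) -
    A * q * ((q ^ 2 - 1) / (q - 1)) * ((B * q ^ 2 - 1) / (q - 1)) *
      ((D * q ^ 2 - 1) / (q - 1)) /
      ((A * B * D * q ^ 6 - 1) / (q - 1) * ((A * q - 1) / (q - 1))) -
    A ^ 2 * q ^ 4 * ((B * q - 1) / (q - 1)) * ((B * q ^ 2 - 1) / (q - 1)) *
      ((D * q - 1) / (q - 1)) * ((D * q ^ 2 - 1) / (q - 1)) /
      ((A * q - 1) / (q - 1) * ((A * q ^ 2 - 1) / (q - 1)) *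
        ((A * B * D * q ^ 5 - 1) / (q - 1)) * ((A * B * D * q ^ 6 - 1) / (q - 1))) = 1 := by
  generalize hu : A * B * D * q ^ 5 - 1 = u at *
  generalize hv : A * B * D * q ^ 6 - 1 = v at *
  field_simp
  subst hu hv
  ring

/-- The reduced identity `F(i,j,c) = 1`. -/
theorem Ffun_eq_one (i j c : ℤ) (hc : 2 ≤ c) (hci : c ≤ i) (hj : j ≥ i + 2) :
    Ffun i j c = 1 := by
  obtain ⟨a, ha⟩ := Int.eq_ofNat_of_zero_le (sub_nonneg.2 hc)
  obtain ⟨b, hb⟩ := Int.eq_ofNat_of_zero_le (sub_nonneg.2 hci)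
  obtain ⟨d, hd⟩ := Int.eq_ofNat_of_zero_le (sub_nonneg.2 hj)
  have e1 : (2 * (c - 1)).toNat = 2 * (a + 1) := by omega
  have e2 : (4 * c).toNat = 2 * (2 * a + 4) := by omega
  unfold Ffun
  rw [e1, e2, hQ_eq (a + d + 2) (j + c - i - 2) (by omega),
    hQ_eq (a + d + 3) (j + c - i - 1) (by omega),
    hQ_eq (a + b + 2) i (by omega), hQ_eq (a + b + 3) (i + 1) (by omega),
    hQ_eq (a + b + d + 4) j (by omega), hQ_eq (a + b + d + 5) (j + 1) (by omega),
    hQ_eq a (c - 2) (by omega), hQ_eq (a + 1) (c - 1) (by omega),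
    hQ_eq 1 1 (by omega), hQ_eq (b + 1) (i - c + 1) (by omega),
    hQ_eq b (i - c) (by omega), hQ_eq (d + 1) (j - i - 1) (by omega),
    hQ_eq d (j - i - 2) (by omega), pow_mul, pow_mul]
  have n1 := tQ_pow_ne 0
  have n2 := tQ_pow_ne a
  have n3 := tQ_pow_ne (a + 1)
  have n4 := tQ_pow_ne (a + b + d + 4)
  have n5 := tQ_pow_ne (a + b + d + 5)
  generalize tQ ^ 2 = q at *
  have key := key_identity q (q ^ a) (q ^ b) (q ^ d) (by simpa using n1)
    (by convert n2 using 1; ring) (by convert n3 using 1; ring)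
    (by convert n4 using 1; ring) (by convert n5 using 1; ring)
  have p0 : q ^ (a + d + 2 + 1) = q ^ a * q ^ d * q ^ 3 := by ring
  have p1 : q ^ (a + d + 3 + 1) = q ^ a * q ^ d * q ^ 4 := by ring
  have p2 : q ^ (a + b + 2 + 1) = q ^ a * q ^ b * q ^ 3 := by ring
  have p3 : q ^ (a + b + 3 + 1) = q ^ a * q ^ b * q ^ 4 := by ring
  have p4 : q ^ (a + b + d + 4 + 1) = q ^ a * q ^ b * q ^ d * q ^ 5 := by ring
  have p5 : q ^ (a + b + d + 5 + 1) = q ^ a * q ^ b * q ^ d * q ^ 6 := by ring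
  have p6 : q ^ (2 * a + 4) = (q ^ a) ^ 2 * q ^ 4 := by ring
  have p7 : q ^ (a + 1 + 1) = q ^ a * q ^ 2 := by ring
  have p8 : q ^ (a + 1) = q ^ a * q := by ring
  have p9 : q ^ (b + 1 + 1) = q ^ b * q ^ 2 := by ring
  have p10 : q ^ (b + 1) = q ^ b * q := by ring
  have p11 : q ^ (d + 1 + 1) = q ^ d * q ^ 2 := by ring
  have p12 : q ^ (d + 1) = q ^ d * q := by ring
  rw [p0, p1, p2, p3, p4, p5, p6, p7, p8, p9, p10, p11, p12]
  exact key
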